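/- arXiv:2401.11912 — 2 statements merged into one kernel-verified Lean document; each statement's English description precedes it below -/
import Mathlib

section
/- Let D be the domain on {1,…,6} consisting of the four linear orders (from most preferred to least preferred) P1 = 1,2,3,4,5,6; P2 = 3,6,2,5,1,4; P3 = 4,1,5,2,6,3; P4 = 6,5,4,3,2,1. Then D is a maximal Condorcet domain on {1,…,6}, and for every 5-element subset A ⊆ {1,…,6} the restriction of D to A consists of exactly 4 distinct orders and is NOT a maximal Condorcet domain on A (i.e., there exists a linear order on A not in the restriction whose addition still yields a Condorcet domain). In particular, D is a discordant Condorcet domain. -/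
/-- `r` is a strict total order on `X`, supported on `X` (i.e. `r` never relates
elements outside `X`). -/
def IsLinearOrderOn {α : Type*} (X : Set α) (r : α → α → Prop) : Prop :=
  (∀ a b, r a b → a ∈ X ∧ b ∈ X) ∧
  (∀ a ∈ X, ¬ r a a) ∧
  (∀ a ∈ X, ∀ b ∈ X, ∀ c ∈ X, r a b → r b c → r a c) ∧
  (∀ a ∈ X, ∀ b ∈ X, a ≠ b → r a b ∨ r b a)

/-- A domain on `X` is a set of linear orders on `X`. -/
def IsDomainOn {α : Type*} (X : Set α) (D : Set (α → α → Prop)) : Prop :=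
  ∀ r ∈ D, IsLinearOrderOn X r

/-- The restriction of the order `r` to the subset `A`. -/
def restrictRel {α : Type*} (A : Set α) (r : α → α → Prop) : α → α → Prop :=
  fun a b => a ∈ A ∧ b ∈ A ∧ r a b

/-- The restriction of the domain `D` to the subset `A`: the set of linear orders
on `A` induced by the orders in `D`. -/
def restrictDom {α : Type*} (A : Set α) (D : Set (α → α → Prop)) :
    Set (α → α → Prop) :=
  restrictRel A '' D

/-- `D` is `(k,s)`-abundant on `X`: its restriction to every `k`-element subset of `X`
contains at least `s` distinct linear orders. -/
def IsAbundant {α : Type*} (X : Set α) (D : Set (α → α → Prop)) (k s : ℕ) : Prop :=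
  ∀ A : Set α, A ⊆ X → A.ncard = k → s ≤ (restrictDom A D).ncard

/-- `D` is exactly `(k,s)`-abundant: `(k,s)`-abundant but not `(k,s+1)`-abundant. -/
def IsExactlyAbundant {α : Type*} (X : Set α) (D : Set (α → α → Prop)) (k s : ℕ) : Prop :=
  IsAbundant X D k s ∧ ¬ IsAbundant X D k (s + 1)

/-- The number of orders in the profile `R` that rank `a` above `b`. -/
noncomputable def majCount {α : Type*} (R : List (α → α → Prop)) (a b : α) : ℕ :=
  Nat.card {i : Fin R.length // (R.get i) a b}

/-- More than half of the orders in the profile `R` rank `a` above `b`. -/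
def MajPrefers {α : Type*} (R : List (α → α → Prop)) (a b : α) : Prop :=
  R.length < 2 * majCount R a b

/-- `D` is a Condorcet domain on `X`: it is a domain on `X` and for every profile
(list of orders from `D`) of odd length, the majority relation is transitive on `X`. -/
def IsCondorcetDomain {α : Type*} (X : Set α) (D : Set (α → α → Prop)) : Prop :=
  IsDomainOn X D ∧
  ∀ R : List (α → α → Prop), (∀ r ∈ R, r ∈ D) → Odd R.length →
    ∀ a ∈ X, ∀ b ∈ X, ∀ c ∈ X,
      MajPrefers R a b → MajPrefers R b c → MajPrefers R a c

/-- A maximal Condorcet domain on `X`. -/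
def IsMaximalCondorcetDomain {α : Type*} (X : Set α) (D : Set (α → α → Prop)) : Prop :=
  IsCondorcetDomain X D ∧
  ∀ D' : Set (α → α → Prop), D ⊆ D' → IsCondorcetDomain X D' → D' = D

/-- The linear order encoded by a duplicate-free list `l` (most preferred first):
`a` is ranked above `b` iff `a` occurs strictly before `b` in `l`. -/
def listRel (l : List ℕ) : ℕ → ℕ → Prop :=
  fun a b => ∃ i j : Fin l.length, (i : ℕ) < (j : ℕ) ∧ l.get i = a ∧ l.get j = b

/-!
A domain of linear orders is Condorcet as soon as no three alternatives are ranked cyclically as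
`abc`, `bca`, `cab` by three of its orders: two majorities always share a voter, so a majority
cycle produces such orders. Conversely, three such orders form a profile with a majority cycle.

If a Condorcet domain induces all four orders of `{m, a, b}` in which `m` is not in the middle,
then each of its orders has `a` and `b` on the same side of `m`. For the domain at hand this yields
enough constraints to determine every order `r` that can be added. The domain is closed under
reversal, hence one may assume that `r` ranks `1` above `4`; then the constraints force `r` to be
`123456` if it ranks `1` above `2`, and `362514` otherwise.

Deleting an alternative loses some of the constraints, and for each deleted alternative an explicit
fifth order fits in.
-/

theorem exists_eq_erase_of_ncard_eq {α : Type*} [DecidableEq α] {S : Finset α} {A : Set α}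
    (hA : A ⊆ S) (hcard : A.ncard + 1 = S.card) : ∃ x ∈ S, A = (S.erase x : Finset α) := by
  lift A to Finset α using S.finite_toSet.subset hA
  rw [Set.ncard_coe_finset] at hcard
  obtain ⟨x, hx, rfl⟩ := Finset.exists_eq_insert_iff.2 ⟨Finset.coe_subset.1 hA, hcard⟩
  exact ⟨x, Finset.mem_insert_self x A, by rw [Finset.erase_insert hx]⟩

namespace IsLinearOrderOn

variable {α : Type*} {X : Set α} {r p : α → α → Prop} {a b : α}

theorem isTrans (hr : IsLinearOrderOn X r) : IsTrans α r where
  trans a b c hab hbc :=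
    hr.2.2.1 a (hr.1 a b hab).1 b (hr.1 a b hab).2 c (hr.1 b c hbc).2 hab hbc

theorem ne (hr : IsLinearOrderOn X r) (hab : r a b) : a ≠ b := by
  rintro rfl
  exact hr.2.1 a (hr.1 a a hab).1 hab

theorem asymm (hr : IsLinearOrderOn X r) (hab : r a b) : ¬ r b a :=
  fun hba => hr.ne (hr.isTrans.trans a b a hab hba) rfl

theorem total (hr : IsLinearOrderOn X r) (ha : a ∈ X) (hb : b ∈ X) (hab : a ≠ b) :
    r a b ∨ r b a :=
  hr.2.2.2 a ha b hb hab

theorem eq_of_imp (hp : IsLinearOrderOn X p) (hr : IsLinearOrderOn X r)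
    (h : ∀ a b, p a b → r a b) : p = r := by
  funext a b
  refine propext ⟨h a b, fun hab => ?_⟩
  obtain ⟨ha, hb⟩ := hr.1 a b hab
  exact (hp.total ha hb (hr.ne hab)).resolve_right fun hba => hr.asymm hab (h b a hba)

end IsLinearOrderOn

section Majority

variable {α : Type*} {R : List (α → α → Prop)} {a b c d : α}

theorem majCount_eq_card_filter (R : List (α → α → Prop)) (a b : α)
    [DecidablePred fun i : Fin R.length => R.get i a b] :
    majCount R a b = (Finset.univ.filter fun i : Fin R.length => R.get i a b).card := by
  rw [majCount, Nat.card_eq_fintype_card, Fintype.card_subtype]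

theorem MajPrefers.exists_mem_and (hab : MajPrefers R a b) (hcd : MajPrefers R c d) :
    ∃ r ∈ R, r a b ∧ r c d := by
  classical
  rw [MajPrefers, majCount_eq_card_filter] at hab hcd
  by_contra! hdisj
  have hcard := Finset.card_union_of_disjoint <|
    (Finset.disjoint_filter (s := Finset.univ) (p := fun i : Fin R.length => R.get i a b)
      (q := fun i => R.get i c d)).2 fun i _ => hdisj _ (List.get_mem R i)
  have hle := Finset.card_le_univ (Finset.univ.filter (fun i : Fin R.length => R.get i a b) ∪
    Finset.univ.filter fun i => R.get i c d)
  rw [Fintype.card_fin] at hle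
  lia

theorem majPrefers_total (hR : ∀ r ∈ R, r a b ∨ r b a) (hodd : Odd R.length) :
    MajPrefers R a b ∨ MajPrefers R b a := by
  classical
  simp only [MajPrefers, majCount_eq_card_filter]
  have hcover : (Finset.univ.filter fun i : Fin R.length => R.get i a b) ∪
      (Finset.univ.filter fun i : Fin R.length => R.get i b a) = Finset.univ := by
    rw [← Finset.filter_or, Finset.filter_true_of_mem fun i _ => hR _ (List.get_mem R i)]
  have hle := Finset.card_union_le (Finset.univ.filter fun i : Fin R.length => R.get i a b)
    (Finset.univ.filter fun i : Fin R.length => R.get i b a)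
  rw [hcover, Finset.card_univ, Fintype.card_fin] at hle
  obtain ⟨k, hk⟩ := hodd
  lia

theorem majPrefers_triple_iff {p q r : α → α → Prop} :
    MajPrefers [p, q, r] a b ↔ (p a b ∧ q a b) ∨ (p a b ∧ r a b) ∨ (q a b ∧ r a b) := by
  classical
  have hcount : majCount [p, q, r] a b =
      (if p a b then 1 else 0) + (if q a b then 1 else 0) + (if r a b then 1 else 0) := by
    rw [majCount_eq_card_filter, Finset.card_filter]
    exact Fin.sum_univ_three fun i : Fin 3 => if [p, q, r].get i a b then 1 else 0
  rw [MajPrefers, hcount]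
  by_cases hp : p a b <;> by_cases hq : q a b <;> by_cases hr : r a b <;> simp [hp, hq, hr]

end Majority

section Triples

variable {α : Type*} {X : Set α} {D E : Set (α → α → Prop)} {r : α → α → Prop} {a b c m : α}

/-- Some order of `D` ranks `a` above `b` above `c`. -/
def RanksTriple (D : Set (α → α → Prop)) (a b c : α) : Prop :=
  ∃ r ∈ D, r a b ∧ r b c

/-- The orders of `D` realize a Condorcet cycle (a cyclic Latin square) on `a`, `b`, `c`. -/
def HasCondorcetCycle (D : Set (α → α → Prop)) (a b c : α) : Prop :=
  RanksTriple D a b c ∧ RanksTriple D b c a ∧ RanksTriple D c a b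

/-- All four orders of `{m, a, b}` in which `m` is not in the middle are induced by `D`; this leaves
"`m` is never in the middle" as the only never condition that `D` can satisfy on this triple. -/
def RealizesNeverMiddle (D : Set (α → α → Prop)) (m a b : α) : Prop :=
  RanksTriple D m a b ∧ RanksTriple D m b a ∧ RanksTriple D a b m ∧ RanksTriple D b a m

/-- The relation `r` does not place `m` between `a` and `b`. Both conjuncts are kept so that the
notion is visibly invariant under reversing `r`. -/
def SameSide (r : α → α → Prop) (m a b : α) : Prop :=
  (r m a ↔ r m b) ∧ (r a m ↔ r b m)

theorem RanksTriple.mono (hDE : D ⊆ E) (h : RanksTriple D a b c) : RanksTriple E a b c :=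
  h.imp fun _ hr => ⟨hDE hr.1, hr.2⟩

theorem RealizesNeverMiddle.mono (hDE : D ⊆ E) (h : RealizesNeverMiddle D m a b) :
    RealizesNeverMiddle E m a b :=
  ⟨h.1.mono hDE, h.2.1.mono hDE, h.2.2.1.mono hDE, h.2.2.2.mono hDE⟩

theorem RealizesNeverMiddle.symm (h : RealizesNeverMiddle D m a b) : RealizesNeverMiddle D m b a :=
  ⟨h.2.1, h.1, h.2.2.2, h.2.2.1⟩

theorem SameSide.swap (h : SameSide r m a b) : SameSide (Function.swap r) m a b :=
  And.symm h

theorem isCondorcetDomain_of_forall_not_hasCondorcetCycle (hD : IsDomainOn X D)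
    (hcycle : ∀ a ∈ X, ∀ b ∈ X, ∀ c ∈ X, ¬ HasCondorcetCycle D a b c) :
    IsCondorcetDomain X D := by
  refine ⟨hD, fun R hRD hodd a ha b hb c hc hab hbc => ?_⟩
  have hac : a ≠ c := by
    rintro rfl
    obtain ⟨r, hr, rab, rba⟩ := hab.exists_mem_and hbc
    exact (hD r (hRD r hr)).asymm rab rba
  have htotal : MajPrefers R a c ∨ MajPrefers R c a :=
    majPrefers_total (fun r hr => (hD r (hRD r hr)).total ha hc hac) hodd
  refine htotal.resolve_right fun hca => hcycle a ha b hb c hc ?_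
  have hranks {x y z : α} (hxy : MajPrefers R x y) (hyz : MajPrefers R y z) :
      RanksTriple D x y z :=
    (hxy.exists_mem_and hyz).imp fun r hr => ⟨hRD r hr.1, hr.2⟩
  exact ⟨hranks hab hbc, hranks hbc hca, hranks hca hab⟩

theorem IsCondorcetDomain.not_hasCondorcetCycle (hD : IsCondorcetDomain X D) :
    ¬ HasCondorcetCycle D a b c := by
  rintro ⟨⟨p, hp, pab, pbc⟩, ⟨q, hq, qbc, qca⟩, ⟨s, hs, sca, sab⟩⟩
  have hmem : ∀ t ∈ [p, q, s], t ∈ D := by simp [hp, hq, hs]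
  have hab : MajPrefers [p, q, s] a b := majPrefers_triple_iff.2 (.inr (.inl ⟨pab, sab⟩))
  have hbc : MajPrefers [p, q, s] b c := majPrefers_triple_iff.2 (.inl ⟨pbc, qbc⟩)
  have hca : MajPrefers [p, q, s] c a := majPrefers_triple_iff.2 (.inr (.inr ⟨qca, sca⟩))
  have hac : MajPrefers [p, q, s] a c :=
    hD.2 _ hmem ⟨1, rfl⟩ a ((hD.1 p hp).1 a b pab).1 b ((hD.1 p hp).1 a b pab).2
      c ((hD.1 p hp).1 b c pbc).2 hab hbc
  obtain ⟨t, ht, tac, tca⟩ := hac.exists_mem_and hca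
  exact (hD.1 t (hmem t ht)).asymm tac tca

theorem IsCondorcetDomain.not_between (hD : IsCondorcetDomain X D)
    (h : RealizesNeverMiddle D m a b) (hr : r ∈ D) (ham : r a m) : ¬ r m b :=
  fun hmb => hD.not_hasCondorcetCycle ⟨⟨r, hr, ham, hmb⟩, h.2.1, h.2.2.2⟩

theorem IsCondorcetDomain.sameSide (hD : IsCondorcetDomain X D)
    (h : RealizesNeverMiddle D m a b) (hr : r ∈ D) : SameSide r m a b := by
  obtain ⟨p, hp, pma, pab⟩ := h.1
  obtain ⟨q, hq, qmb, -⟩ := h.2.1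
  obtain ⟨hm, ha⟩ := (hD.1 p hp).1 m a pma
  have hb := ((hD.1 p hp).1 a b pab).2
  have hma := (hD.1 r hr).total hm ha ((hD.1 p hp).ne pma)
  have hmb := (hD.1 r hr).total hm hb ((hD.1 q hq).ne qmb)
  have hamb := hD.not_between h hr
  have hbma := hD.not_between h.symm hr
  unfold SameSide
  tauto

theorem not_isMaximalCondorcetDomain_of_insert (hr : r ∉ D)
    (hins : IsCondorcetDomain X (insert r D)) : ¬ IsMaximalCondorcetDomain X D :=
  fun hmax => hr (hmax.2 _ (Set.subset_insert r D) hins ▸ Set.mem_insert r D)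

end Triples

section Rankings

/-- The list `l` is a ranking of `X`: it contains each element of `X` exactly once and nothing
else. -/
def IsRankingOf (X : Finset ℕ) (l : List ℕ) : Prop :=
  l.Nodup ∧ l.toFinset = X

instance (X : Finset ℕ) (l : List ℕ) : Decidable (IsRankingOf X l) :=
  inferInstanceAs (Decidable (_ ∧ _))

/-- The domain of the orders encoded by the rankings in `L`. -/
def rankingDomain (L : Finset (List ℕ)) : Set (ℕ → ℕ → Prop) :=
  listRel '' L

variable {X A : Finset ℕ} {L : Finset (List ℕ)} {l : List ℕ} {r : ℕ → ℕ → Prop}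
  {a b c : ℕ}

theorem listRel_iff_sublist : listRel l a b ↔ [a, b].Sublist l := by
  rw [List.sublist_iff_exists_fin_orderEmbedding_get_eq]
  constructor
  · rintro ⟨i, j, hij, rfl, rfl⟩
    refine ⟨OrderEmbedding.ofStrictMono ![i, j] ?_, ?_⟩
    · simpa [Fin.strictMono_iff_lt_succ] using hij
    · simp [Fin.forall_fin_two]
  · rintro ⟨f, hf⟩
    exact ⟨f 0, f 1, f.strictMono Fin.zero_lt_one, (hf 0).symm, (hf 1).symm⟩

theorem pairwise_listRel (l : List ℕ) : l.Pairwise (listRel l) :=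
  List.pairwise_iff_forall_sublist.2 listRel_iff_sublist.2

theorem rel_of_pairwise_of_listRel (hl : l.Pairwise r) (h : listRel l a b) : r a b :=
  List.pairwise_iff_forall_sublist.1 hl (listRel_iff_sublist.1 h)

theorem IsRankingOf.mem_iff (hl : IsRankingOf X l) : a ∈ l ↔ a ∈ X := by
  rw [← hl.2, List.mem_toFinset]

theorem IsRankingOf.isLinearOrderOn (hl : IsRankingOf X l) : IsLinearOrderOn X (listRel l) := by
  have hinj := List.nodup_iff_injective_get.1 hl.1
  simp only [IsLinearOrderOn, Finset.mem_coe, ← hl.mem_iff]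
  refine ⟨?_, ?_, ?_, ?_⟩
  · rintro _ _ ⟨i, j, -, rfl, rfl⟩
    exact ⟨l.get_mem i, l.get_mem j⟩
  · rintro a - ⟨i, j, hij, hi, hj⟩
    exact hij.ne (congrArg Fin.val (hinj (hi.trans hj.symm)))
  · rintro _ - _ - _ - ⟨i, j, hij, rfl, rfl⟩ ⟨j', k, hjk, hj, rfl⟩
    exact ⟨i, k, hij.trans (hinj hj ▸ hjk), rfl, rfl⟩
  · intro a ha b hb hab
    obtain ⟨i, rfl⟩ := List.get_of_mem ha
    obtain ⟨j, rfl⟩ := List.get_of_mem hb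
    have hij : i ≠ j := fun h => hab (congrArg l.get h)
    exact hij.lt_or_gt.imp (⟨i, j, ·, rfl, rfl⟩) (⟨j, i, ·, rfl, rfl⟩)

theorem IsRankingOf.sublist_triple_iff (hl : IsRankingOf X l) :
    [a, b, c].Sublist l ↔ listRel l a b ∧ listRel l b c := by
  have hlin := hl.isLinearOrderOn
  constructor
  · intro h
    have hpair := (pairwise_listRel l).sublist h
    grind
  · rintro ⟨hab, hbc⟩
    have hac : listRel l a c := hlin.isTrans.trans a b c hab hbc
    have hnodup : [a, b, c].Nodup := by simp [hlin.ne hab, hlin.ne hbc, hlin.ne hac]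
    have hsub : [a, b, c] ⊆ l := by
      simp [hl.mem_iff, Finset.mem_coe.1 (hlin.1 a b hab).1, Finset.mem_coe.1 (hlin.1 b c hbc).1,
        Finset.mem_coe.1 (hlin.1 b c hbc).2]
    have : Std.Antisymm (listRel l) := ⟨fun x y hxy hyx => (hlin.asymm hxy hyx).elim⟩
    exact List.sublist_of_subperm_of_pairwise (hnodup.subperm hsub) (by simp [hab, hbc, hac])
      (pairwise_listRel l)

theorem IsRankingOf.listRel_injOn : Set.InjOn listRel {l | IsRankingOf X l} := by
  intro l hl k hk h
  refine (List.perm_of_nodup_nodup_toFinset_eq hl.1 hk.1 (hl.2.trans hk.2.symm)).eq_of_pairwise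
    (fun a b _ _ hab hba => (hl.isLinearOrderOn.asymm hab hba).elim) (pairwise_listRel l) ?_
  rw [h]
  exact pairwise_listRel k

theorem IsRankingOf.listRel_eq_of_isChain (hl : IsRankingOf X l) (hr : IsLinearOrderOn X r)
    (hchain : l.IsChain r) : listRel l = r := by
  have := hr.isTrans
  exact hl.isLinearOrderOn.eq_of_imp hr fun a b => rel_of_pairwise_of_listRel hchain.pairwise

theorem IsRankingOf.filter (hl : IsRankingOf X l) (hA : A ⊆ X) :
    IsRankingOf A (l.filter (· ∈ A)) := by
  refine ⟨hl.1.filter _, ?_⟩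
  ext a
  simpa [hl.mem_iff] using @hA a

theorem isRankingOf_of_mem_image_filter (hL : ∀ l ∈ L, IsRankingOf X l) (hA : A ⊆ X) :
    ∀ l ∈ L.image (List.filter (· ∈ A)), IsRankingOf A l :=
  Finset.forall_mem_image.2 fun l hl => (hL l hl).filter hA

theorem restrictRel_listRel (A : Finset ℕ) (l : List ℕ) :
    restrictRel A (listRel l) = listRel (l.filter (· ∈ A)) := by
  funext a b
  simp only [restrictRel, listRel_iff_sublist, Finset.mem_coe, eq_iff_iff]
  constructor
  · rintro ⟨ha, hb, h⟩
    simpa [ha, hb] using h.filter (· ∈ A)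
  · intro h
    have hmem {x : ℕ} (hx : x ∈ [a, b]) : x ∈ A := by simpa using List.of_mem_filter (h.subset hx)
    exact ⟨hmem (by simp), hmem (by simp), h.trans List.filter_sublist⟩

theorem restrictDom_rankingDomain (A : Finset ℕ) (L : Finset (List ℕ)) :
    restrictDom A (rankingDomain L) = rankingDomain (L.image (List.filter (· ∈ A))) := by
  simp only [restrictDom, rankingDomain, Set.image_image, restrictRel_listRel, Finset.coe_image]

theorem rankingDomain_insert (l : List ℕ) (L : Finset (List ℕ)) :
    rankingDomain (insert l L) = insert (listRel l) (rankingDomain L) := by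
  simp only [rankingDomain, Finset.coe_insert, Set.image_insert_eq]

theorem ncard_rankingDomain (hL : ∀ l ∈ L, IsRankingOf X l) :
    (rankingDomain L).ncard = L.card := by
  rw [rankingDomain, (IsRankingOf.listRel_injOn.mono hL).ncard_image,
    Set.ncard_coe_finset]

theorem ranksTriple_rankingDomain_iff (hL : ∀ l ∈ L, IsRankingOf X l) :
    RanksTriple (rankingDomain L) a b c ↔ ∃ l ∈ L, [a, b, c].Sublist l := by
  simp only [RanksTriple, rankingDomain, Set.exists_mem_image, Finset.mem_coe]
  exact exists_congr fun l => and_congr_right fun hl => (hL l hl).sublist_triple_iff.symm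

theorem isCondorcetDomain_rankingDomain (hL : ∀ l ∈ L, IsRankingOf X l)
    (hcycle : ∀ a ∈ X, ∀ b ∈ X, ∀ c ∈ X, ¬ ((∃ l ∈ L, [a, b, c].Sublist l) ∧
      (∃ l ∈ L, [b, c, a].Sublist l) ∧ ∃ l ∈ L, [c, a, b].Sublist l)) :
    IsCondorcetDomain X (rankingDomain L) := by
  refine isCondorcetDomain_of_forall_not_hasCondorcetCycle ?_ ?_
  · rintro _ ⟨l, hl, rfl⟩
    exact (hL l hl).isLinearOrderOn
  · simpa only [HasCondorcetCycle, ranksTriple_rankingDomain_iff hL, Finset.mem_coe] using hcycle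

theorem not_isMaximalCondorcetDomain_rankingDomain (hL : ∀ k ∈ insert l L, IsRankingOf X k)
    (hl : l ∉ L) (hins : IsCondorcetDomain X (rankingDomain (insert l L))) :
    ¬ IsMaximalCondorcetDomain X (rankingDomain L) := by
  refine not_isMaximalCondorcetDomain_of_insert (r := listRel l) ?_
    (rankingDomain_insert l L ▸ hins)
  rintro ⟨k, hk, hkl⟩
  exact hl (IsRankingOf.listRel_injOn (hL k (Finset.mem_insert_of_mem hk))
    (hL l (Finset.mem_insert_self l L)) hkl ▸ hk)

end Rankings

section Discordant

variable {r : ℕ → ℕ → Prop} {D : Set (ℕ → ℕ → Prop)} {x : ℕ}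

/-- The four rankings of the discordant domain; the set is closed under `List.reverse`. -/
def discordantRankings : Finset (List ℕ) :=
  {[1, 2, 3, 4, 5, 6], [3, 6, 2, 5, 1, 4], [4, 1, 5, 2, 6, 3], [6, 5, 4, 3, 2, 1]}

/-- Triples `(m, a, b)` such that `discordantRankings` forces `m` never to be in the middle of
`m`, `a`, `b`. The list is not exhaustive: it is a selection that suffices for maximality. -/
def neverMiddleTriples : List (ℕ × ℕ × ℕ) :=
  [(4, 1, 3), (3, 4, 5), (3, 4, 6), (5, 1, 4), (5, 2, 3), (6, 1, 4), (6, 2, 4),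
    (6, 2, 5), (1, 2, 5), (1, 3, 5), (1, 3, 6), (2, 3, 6)]

/-- A ranking of `{1, …, 6} \ {x}` that can be added to the restriction of the discordant domain;
the empty list is a junk value for `x ∉ {1, …, 6}`. -/
def additionalRanking : ℕ → List ℕ
  | 1 => [2, 3, 5, 4, 6]
  | 2 => [1, 3, 4, 6, 5]
  | 3 => [2, 5, 1, 4, 6]
  | 4 => [1, 3, 6, 2, 5]
  | 5 => [2, 1, 3, 4, 6]
  | 6 => [1, 3, 2, 4, 5]
  | _ => []

theorem rankingDomain_discordantRankings :
    rankingDomain discordantRankings = {listRel [1, 2, 3, 4, 5, 6], listRel [3, 6, 2, 5, 1, 4],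
      listRel [4, 1, 5, 2, 6, 3], listRel [6, 5, 4, 3, 2, 1]} := by
  simp only [rankingDomain, discordantRankings, Finset.coe_insert, Finset.coe_singleton,
    Set.image_insert_eq, Set.image_singleton]

theorem isRankingOf_of_mem_discordantRankings :
    ∀ l ∈ discordantRankings, IsRankingOf (Finset.Icc 1 6) l := by
  decide +kernel

theorem reverse_mem_discordantRankings :
    ∀ l ∈ discordantRankings, l.reverse ∈ discordantRankings := by
  decide

theorem isCondorcetDomain_discordantRankings :
    IsCondorcetDomain (Finset.Icc 1 6 : Finset ℕ) (rankingDomain discordantRankings) :=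
  isCondorcetDomain_rankingDomain isRankingOf_of_mem_discordantRankings (by decide +kernel)

theorem realizesNeverMiddle_of_mem_neverMiddleTriples :
    ∀ t ∈ neverMiddleTriples,
      RealizesNeverMiddle (rankingDomain discordantRankings) t.1 t.2.1 t.2.2 := by
  simp only [RealizesNeverMiddle,
    ranksTriple_rankingDomain_iff isRankingOf_of_mem_discordantRankings]
  decide +kernel

theorem exists_isChain_of_rel_one_four (h12 : r 1 2 ∨ r 2 1) (h14 : r 1 4)
    (hside : ∀ t ∈ neverMiddleTriples, SameSide r t.1 t.2.1 t.2.2) :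
    ∃ l ∈ discordantRankings, l.IsChain r := by
  simp only [neverMiddleTriples, List.forall_mem_cons, SameSide] at hside
  obtain ⟨s413, s345, s346, s514, s523, s614, s624, s625, s125, s135, s136, s236, -⟩ := hside
  have h34 : r 3 4 := s413.2.1 h14
  have h36 : r 3 6 := s346.1.1 h34
  have h25 : r 2 5 := s523.2.2 (s345.1.1 h34)
  rcases h12 with h12 | h21
  · have h15 : r 1 5 := s125.1.1 h12
    have h16 : r 1 6 := s136.1.1 (s135.1.2 h15)
    have h45 : r 4 5 := s514.2.1 h15
    have h26 : r 2 6 := s624.2.2 (s614.2.1 h16)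
    have h56 : r 5 6 := s625.2.1 h26
    have h23 : r 2 3 := s236.1.2 h26
    exact ⟨[1, 2, 3, 4, 5, 6], by decide, by simp [h12, h23, h34, h45, h56]⟩
  · have h51 : r 5 1 := s125.2.1 h21
    have h61 : r 6 1 := s136.2.1 (s135.2.2 h51)
    have h62 : r 6 2 := s624.1.2 (s614.1.1 h61)
    exact ⟨[3, 6, 2, 5, 1, 4], by decide, by simp [h36, h62, h25, h51, h14]⟩

theorem exists_isChain_of_sameSide (h12 : r 1 2 ∨ r 2 1) (h14 : r 1 4 ∨ r 4 1)
    (hside : ∀ t ∈ neverMiddleTriples, SameSide r t.1 t.2.1 t.2.2) :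
    ∃ l ∈ discordantRankings, l.IsChain r := by
  rcases h14 with h14 | h41
  · exact exists_isChain_of_rel_one_four h12 h14 hside
  · obtain ⟨l, hl, hchain⟩ := exists_isChain_of_rel_one_four (r := Function.swap r) h12.symm h41
      fun t ht => (hside t ht).swap
    exact ⟨l.reverse, reverse_mem_discordantRankings l hl, List.isChain_reverse.2 hchain⟩

theorem mem_rankingDomain_of_isCondorcetDomain (hsub : rankingDomain discordantRankings ⊆ D)
    (hD : IsCondorcetDomain (Finset.Icc 1 6 : Finset ℕ) D) (hr : r ∈ D) :
    r ∈ rankingDomain discordantRankings := by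
  have hlin := hD.1 r hr
  obtain ⟨l, hl, hchain⟩ := exists_isChain_of_sameSide
    (hlin.total (by simp) (by simp) (by simp)) (hlin.total (by simp) (by simp) (by simp))
    fun t ht => hD.sameSide ((realizesNeverMiddle_of_mem_neverMiddleTriples t ht).mono hsub) hr
  exact ⟨l, hl, (isRankingOf_of_mem_discordantRankings l hl).listRel_eq_of_isChain hlin hchain⟩

theorem isMaximalCondorcetDomain_discordantRankings :
    IsMaximalCondorcetDomain (Finset.Icc 1 6 : Finset ℕ) (rankingDomain discordantRankings) :=
  ⟨isCondorcetDomain_discordantRankings, fun _ hsub hD =>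
    Set.Subset.antisymm (fun _ => mem_rankingDomain_of_isCondorcetDomain hsub hD) hsub⟩

theorem ncard_restrictDom_discordantRankings (hx : x ∈ Finset.Icc 1 6) :
    (restrictDom ((Finset.Icc 1 6).erase x : Finset ℕ)
      (rankingDomain discordantRankings)).ncard = 4 := by
  rw [restrictDom_rankingDomain, ncard_rankingDomain (isRankingOf_of_mem_image_filter
    isRankingOf_of_mem_discordantRankings (Finset.erase_subset x _))]
  revert x
  decide +kernel

theorem isRankingOf_additionalRanking :
    ∀ x ∈ Finset.Icc 1 6, IsRankingOf ((Finset.Icc 1 6).erase x) (additionalRanking x) := by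
  decide +kernel

theorem additionalRanking_notMem_image_filter :
    ∀ x ∈ Finset.Icc 1 6, additionalRanking x ∉
      discordantRankings.image (List.filter (· ∈ (Finset.Icc 1 6).erase x)) := by
  decide +kernel

theorem additionalRanking_forall_not_cycle :
    ∀ x ∈ Finset.Icc 1 6,
      let A := (Finset.Icc 1 6).erase x
      let L := insert (additionalRanking x) (discordantRankings.image (List.filter (· ∈ A)))
      ∀ a ∈ A, ∀ b ∈ A, ∀ c ∈ A, ¬ ((∃ l ∈ L, [a, b, c].Sublist l) ∧
        (∃ l ∈ L, [b, c, a].Sublist l) ∧ ∃ l ∈ L, [c, a, b].Sublist l) := by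
  decide +kernel

theorem not_isMaximalCondorcetDomain_restrictDom_discordantRankings (hx : x ∈ Finset.Icc 1 6) :
    ¬ IsMaximalCondorcetDomain ((Finset.Icc 1 6).erase x : Finset ℕ)
      (restrictDom ((Finset.Icc 1 6).erase x : Finset ℕ) (rankingDomain discordantRankings)) := by
  rw [restrictDom_rankingDomain]
  have hrank : ∀ k ∈ insert (additionalRanking x)
      (discordantRankings.image (List.filter (· ∈ (Finset.Icc 1 6).erase x))),
      IsRankingOf ((Finset.Icc 1 6).erase x) k :=
    (Finset.forall_mem_insert _ _ _).2 ⟨isRankingOf_additionalRanking x hx,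
      isRankingOf_of_mem_image_filter isRankingOf_of_mem_discordantRankings
        (Finset.erase_subset x _)⟩
  exact not_isMaximalCondorcetDomain_rankingDomain hrank
    (additionalRanking_notMem_image_filter x hx)
    (isCondorcetDomain_rankingDomain hrank (additionalRanking_forall_not_cycle x hx))

end Discordant

/-- The domain `{123456, 362514, 415263, 654321}` is a maximal Condorcet domain on
`{1,…,6}` whose restriction to every 5-element subset consists of exactly 4 orders
and is not a maximal Condorcet domain there; i.e. it is discordant. -/
theorem smallest_discordant_domain :
    IsMaximalCondorcetDomain (Set.Icc 1 6)
      ({listRel [1,2,3,4,5,6], listRel [3,6,2,5,1,4],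
        listRel [4,1,5,2,6,3], listRel [6,5,4,3,2,1]} : Set (ℕ → ℕ → Prop)) ∧
    ∀ A : Set ℕ, A ⊆ Set.Icc 1 6 → A.ncard = 5 →
      (restrictDom A
          {listRel [1,2,3,4,5,6], listRel [3,6,2,5,1,4],
           listRel [4,1,5,2,6,3], listRel [6,5,4,3,2,1]}).ncard = 4 ∧
      ¬ IsMaximalCondorcetDomain A
          (restrictDom A
            {listRel [1,2,3,4,5,6], listRel [3,6,2,5,1,4],
             listRel [4,1,5,2,6,3], listRel [6,5,4,3,2,1]}) := by
  rw [← rankingDomain_discordantRankings, ← Finset.coe_Icc]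
  refine ⟨isMaximalCondorcetDomain_discordantRankings, fun A hA hcard => ?_⟩
  obtain ⟨x, hx, rfl⟩ := exists_eq_erase_of_ncard_eq hA (by rw [hcard]; rfl)
  exact ⟨ncard_restrictDom_discordantRankings hx,
    not_isMaximalCondorcetDomain_restrictDom_discordantRankings hx⟩
end

section
/- For every integer k ≥ 3 there exists an integer N = R_u(k) such that for every n ≥ N and every Condorcet domain D on {1,…,n}, there exist a k-element subset A ⊆ {1,…,n} and a pair (i,j) ∈ {1,2,3} × {1,2,3} such that every triple a < b < c of elements of A satisfies the never condition iNj in D: no order of D, restricted to {a,b,c}, places the i-th smallest element of the triple in the j-th position from the top. -/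
/-- The position (from the top, 1-based) of `x` within the triple `{a,b,c}` under the
order `r`: one plus the number of elements of the triple ranked above `x`. -/
noncomputable def posInTriple (r : ℕ → ℕ → Prop) (a b c x : ℕ) : ℕ :=
  1 + Set.ncard {y : ℕ | (y = a ∨ y = b ∨ y = c) ∧ r y x}

/-- The `i`-th smallest element of the triple `a < b < c`. -/
def tripleNth (a b c i : ℕ) : ℕ := if i = 1 then a else if i = 2 then b else c

/-- The never condition `iNj` holds for the triple `a < b < c` in the domain `D`:
no order of `D`, restricted to `{a,b,c}`, places the `i`-th smallest element of the
triple in the `j`-th position from the top. -/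
def NeverCondition (D : Set (ℕ → ℕ → Prop)) (a b c i j : ℕ) : Prop :=
  ∀ r ∈ D, posInTriple r a b c (tripleNth a b c i) ≠ j

/-!
The proof is Ramsey's theorem for triples, applied to the colouring that assigns to each triple a
never condition it satisfies.

Such a condition always exists. The six orders of a triple fall into two cyclic classes,
`{xyz, yzx, zxy}` and `{zyx, yxz, xzy}`. A Condorcet domain misses an order in each class, since
one voter for each order of a class is a Condorcet paradox. Two orders from different classes agree
on the position of exactly one alternative, and no other order gives that alternative that
position. So the two missing orders leave a position that this alternative never takes.
-/

open Finset

universe u v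

section Ramsey

/-- All `r`-element subsets of `A` have colour `i` under the colouring `c`. Only the values of `c`
on `r`-element sets matter. -/
def IsMonochromatic {α : Type u} {κ : Type v} (c : Finset α → κ) (r : ℕ) (i : κ)
    (A : Finset α) : Prop :=
  ∀ T ⊆ A, #T = r → c T = i

/-- The partition relation `N → (k i)ᵢ^r` of Erdős and Rado: however the `r`-element subsets of a
set with at least `N` elements are coloured, for some colour `i` there is a subset with `k i`
elements that is monochromatic of colour `i`. -/
def PartitionRelation {κ : Type v} (N r : ℕ) (k : κ → ℕ) : Prop :=
  ∀ ⦃α : Type u⦄ (S : Finset α) (c : Finset α → κ), N ≤ #S →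
    ∃ i, ∃ A ⊆ S, #A = k i ∧ IsMonochromatic c r i A

variable {κ : Type v} {r M N : ℕ} {k : κ → ℕ}

theorem IsMonochromatic.insert {α : Type u} [DecidableEq α] {c : Finset α → κ} {i : κ}
    {A : Finset α} {x : α} (hA : IsMonochromatic c (r + 1) i A)
    (hx : IsMonochromatic (fun T => c (insert x T)) r i A) :
    IsMonochromatic c (r + 1) i (insert x A) := by
  intro T hT hcard
  by_cases hxT : x ∈ T
  · rw [← insert_erase hxT]
    exact hx (T.erase x) (subset_insert_iff.mp hT) (by rw [card_erase_of_mem hxT, hcard]; rfl)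
  · exact hA T ((subset_insert_iff_of_notMem hxT).mp hT) hcard

theorem PartitionRelation.mono (h : PartitionRelation.{u} M r k) (hMN : M ≤ N) :
    PartitionRelation.{u} N r k :=
  fun _ S c hS => h S c (hMN.trans hS)

theorem partitionRelation_zero (hN : ∀ i, k i ≤ N) : PartitionRelation.{u} N 0 k := by
  intro α S c hS
  obtain ⟨A, hAS, hA⟩ := exists_subset_card_eq ((hN (c ∅)).trans hS)
  exact ⟨c ∅, A, hAS, hA, fun T _ hT => by rw [card_eq_zero.mp hT]⟩

theorem partitionRelation_succ_of_eq_zero {i : κ} (hi : k i = 0) :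
    PartitionRelation.{u} N (r + 1) k :=
  fun _ _ _ _ => ⟨i, ∅, empty_subset _, by rw [card_empty, hi],
    fun T hT hcard => by simp [subset_empty.mp hT] at hcard⟩

-- Fix a vertex `x` and find a large set `B` all of whose `r`-subsets, joined to `x`, have the
-- same colour `i`. Inside `B` it suffices to look for one element less in colour `i`.
theorem PartitionRelation.succ [DecidableEq κ] (hk : ∀ i, k i ≠ 0)
    (hM : ∀ i, PartitionRelation.{u} M (r + 1) (Function.update k i (k i - 1)))
    (hN : PartitionRelation.{u} N r fun _ : κ => M) :
    PartitionRelation.{u} (N + 1) (r + 1) k := by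
  classical
  intro α S c hS
  obtain ⟨x, hxS⟩ : S.Nonempty := card_pos.mp (Nat.zero_lt_of_lt hS)
  obtain ⟨i, B, hBS, hBcard, hB⟩ := hN (S.erase x) (fun T => c (insert x T))
    (by rw [card_erase_of_mem hxS]; omega)
  obtain ⟨j, A, hAB, hAcard, hA⟩ := hM i B c hBcard.ge
  have hAS : A ⊆ S.erase x := hAB.trans hBS
  by_cases hji : j = i
  · subst hji
    rw [Function.update_self] at hAcard
    have hxA : x ∉ A := fun hx => notMem_erase x S (hAS hx)
    refine ⟨j, insert x A, insert_subset hxS (hAS.trans (erase_subset x S)), ?_,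
      hA.insert fun T hT => hB T (hT.trans hAB)⟩
    rw [card_insert_of_notMem hxA, hAcard, Nat.sub_add_cancel (Nat.pos_of_ne_zero (hk j))]
  · rw [Function.update_of_ne hji] at hAcard
    exact ⟨j, A, hAS.trans (erase_subset x S), hAcard, hA⟩

theorem exists_partitionRelation [Finite κ] (r : ℕ) (k : κ → ℕ) :
    ∃ N, PartitionRelation.{u} N r k := by
  classical
  induction r generalizing k with
  | zero =>
    obtain ⟨N, hN⟩ := Finite.exists_le k
    exact ⟨N, partitionRelation_zero hN⟩
  | succ r ihr =>
    induction k using WellFoundedLT.induction with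
    | ind k ihk =>
      by_cases hk : ∃ i, k i = 0
      · exact ⟨0, partitionRelation_succ_of_eq_zero hk.choose_spec⟩
      push Not at hk
      choose m hm using fun i => ihk (Function.update k i (k i - 1))
        (update_lt_self_iff.mpr (Nat.sub_one_lt (hk i)))
      obtain ⟨M, hmM⟩ := Finite.exists_le m
      obtain ⟨N, hN⟩ := ihr fun _ => M
      exact ⟨N + 1, PartitionRelation.succ hk (fun i => (hm i).mono (hmM i)) hN⟩

theorem exists_monochromatic_strictMono [Finite κ] [Nonempty κ] (r : ℕ) (k : κ → ℕ) :
    ∃ N, ∀ {α : Type u} [LinearOrder α] (S : Finset α) (c : (Fin r → α) → κ), N ≤ #S →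
      ∃ i, ∃ A ⊆ S, #A = k i ∧ ∀ x, StrictMono x → (∀ m, x m ∈ A) → c x = i := by
  obtain ⟨N, hN⟩ := exists_partitionRelation.{u} r k
  refine ⟨N, fun {α} _ S c hS => ?_⟩
  have hcolour (T : Finset α) : ∃ i, ∀ x, StrictMono x → Set.range x = T → c x = i := by
    by_cases hT : ∃ x : Fin r → α, StrictMono x ∧ Set.range x = T
    · obtain ⟨x, hx, hxT⟩ := hT
      exact ⟨c x, fun y hy hyT => congrArg c ((hy.range_inj hx).mp (hyT.trans hxT.symm))⟩
    · push Not at hT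
      exact ⟨Classical.arbitrary κ, fun x hx hxT => absurd hxT (hT x hx)⟩
  choose c' hc' using hcolour
  obtain ⟨i, A, hAS, hAcard, hA⟩ := hN S c' hS
  refine ⟨i, A, hAS, hAcard, fun x hx hxA => ?_⟩
  rw [hc' (univ.image x) x hx (by simp)]
  exact hA _ (image_subset_iff.mpr fun m _ => hxA m)
    (by rw [card_image_of_injective _ hx.injective, card_fin])

end Ramsey

section Condorcet

variable {α : Type u} {X : Set α} {D : Set (α → α → Prop)} {r s t : α → α → Prop} {a b c : α}

theorem IsLinearOrderOn.asymm_s13 (hr : IsLinearOrderOn X r) (hab : r a b) : ¬ r b a := fun hba =>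
  have ⟨ha, hb⟩ := hr.1 a b hab
  hr.2.1 a ha (hr.2.2.1 a ha b hb a ha hab hba)

theorem IsLinearOrderOn.not_rel_iff (hr : IsLinearOrderOn X r) (ha : a ∈ X) (hb : b ∈ X)
    (hab : a ≠ b) : ¬ r a b ↔ r b a :=
  ⟨(hr.2.2.2 a ha b hb hab).resolve_left, hr.asymm_s13⟩

theorem majCount_nil (a b : α) : majCount [] a b = 0 := by
  simp [majCount]

open Classical in
theorem majCount_cons (r : α → α → Prop) (R : List (α → α → Prop)) (a b : α) :
    majCount (r :: R) a b = (if r a b then 1 else 0) + majCount R a b := by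
  simp only [majCount, Nat.card_eq_fintype_card, Fintype.card_subtype]
  exact Fin.card_filter_univ_succ' fun i => (r :: R).get i a b

theorem majPrefers_three : MajPrefers [r, s, t] a b ↔
    r a b ∧ s a b ∨ s a b ∧ t a b ∨ t a b ∧ r a b := by
  simp only [MajPrefers, majCount_cons, majCount_nil, List.length_cons, List.length_nil]
  by_cases hr : r a b <;> by_cases hs : s a b <;> by_cases ht : t a b <;> simp [hr, hs, ht]

/-- Restricted to `{a, b, c}`, the linear order `r` is `abc`. By transitivity two comparisons
determine it. -/
def RanksChain (r : α → α → Prop) (a b c : α) : Prop :=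
  r a b ∧ r b c

theorem IsCondorcetDomain.not_cyclic (hD : IsCondorcetDomain X D)
    (hr : r ∈ D) (hs : s ∈ D) (ht : t ∈ D) (hrabc : RanksChain r a b c)
    (hsbca : RanksChain s b c a) : ¬ RanksChain t c a b := by
  intro htcab
  obtain ⟨ha, hb⟩ := (hD.1 r hr).1 a b hrabc.1
  have hc := ((hD.1 r hr).1 b c hrabc.2).2
  have hac : MajPrefers [r, s, t] a c :=
    hD.2 [r, s, t] (by simp [hr, hs, ht]) (by simp [Nat.odd_iff]) a ha b hb c hc
      (majPrefers_three.mpr (.inr (.inr ⟨htcab.2, hrabc.1⟩)))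
      (majPrefers_three.mpr (.inl ⟨hrabc.2, hsbca.1⟩))
  have hsac : ¬ s a c := (hD.1 s hs).asymm_s13 hsbca.2
  have htac : ¬ t a c := (hD.1 t ht).asymm_s13 htcab.1
  simp [majPrefers_three, hsac, htac] at hac

theorem IsCondorcetDomain.exists_missing_rotation (hD : IsCondorcetDomain X D) (x : Fin 3 → α) :
    ∃ p, ∀ r ∈ D, ¬ RanksChain r (x p) (x (p + 1)) (x (p + 2)) := by
  by_contra! hall
  obtain ⟨r, hr, hr012⟩ := hall 0
  obtain ⟨s, hs, hs120⟩ := hall 1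
  obtain ⟨t, ht, ht201⟩ := hall 2
  exact hD.not_cyclic hr hs ht hr012 hs120 ht201

/-- The never condition `iNj` for the alternatives `x 0, …, x (n - 1)`: no order of `D` restricted
to them places `x i` in position `j`. Indices and positions start at `0`, so the position of `x i`
is the number of alternatives ranked above it. -/
def NeverRanks {n : ℕ} (D : Set (α → α → Prop)) (x : Fin n → α) (i j : Fin n) : Prop :=
  ∀ r ∈ D, {m | r (x m) (x i)}.ncard ≠ j

theorem IsLinearOrderOn.ncard_above [DecidableRel r] (hr : IsLinearOrderOn X r)
    (x : Fin 3 → α) (i : Fin 3) :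
    {m | r (x m) (x i)}.ncard =
      (if r (x (i + 1)) (x i) then 1 else 0) + (if r (x (i + 2)) (x i) then 1 else 0) := by
  have hirrefl : ¬ r (x i) (x i) := fun h => hr.asymm_s13 h h
  calc {m | r (x m) (x i)}.ncard
      = ∑ m, if r (x m) (x i) then 1 else 0 := by
        rw [← coe_filter_univ, Set.ncard_coe_finset, card_filter]
    _ = ∑ m, if r (x (i + m)) (x i) then 1 else 0 :=
        (Equiv.sum_comp (Equiv.addLeft i) fun m => if r (x m) (x i) then 1 else 0).symm
    _ = _ := by simp only [Fin.sum_univ_three, add_zero, if_neg hirrefl, zero_add]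

theorem IsLinearOrderOn.ranksChain_of_ncard_above (hr : IsLinearOrderOn X r) {x : Fin 3 → α}
    (hxX : ∀ m, x m ∈ X) (hx : Function.Injective x) {i j : Fin 3}
    (hij : {m | r (x m) (x i)}.ncard = j) :
    RanksChain r (x (i - j)) (x (i - j + 1)) (x (i - j + 2)) ∨
      RanksChain r (x (i + j)) (x (i + j - 1)) (x (i + j - 2)) := by
  classical
  have hne (m : Fin 3) (hm : m ≠ 0) : x (i + m) ≠ x i := hx.ne (by simpa using hm)
  have hi1 := hr.not_rel_iff (hxX (i + 1)) (hxX i) (hne 1 (by decide))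
  have hi2 := hr.not_rel_iff (hxX (i + 2)) (hxX i) (hne 2 (by decide))
  have h12 := hr.2.2.2 _ (hxX (i + 1)) _ (hxX (i + 2)) (hx.ne (by simp))
  have hj : ∀ j : Fin 3, j = 0 ∨ j = 1 ∨ j = 2 := by decide
  have hneg_one : (-1 : Fin 3) = 2 := rfl
  have hneg_two : (-2 : Fin 3) = 1 := rfl
  rw [hr.ncard_above] at hij
  obtain rfl | rfl | rfl := hj j <;>
    simp only [RanksChain, sub_eq_add_neg, add_assoc, hneg_one, hneg_two, neg_zero, add_zero,
      Fin.reduceAdd]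
  · have htop : r (x i) (x (i + 1)) ∧ r (x i) (x (i + 2)) := by simpa [hi1, hi2] using hij
    exact h12.imp (⟨htop.1, ·⟩) (⟨htop.2, ·⟩)
  · have hmiddle : r (x (i + 2)) (x i) ∧ r (x i) (x (i + 1)) ∨
        r (x (i + 1)) (x i) ∧ r (x i) (x (i + 2)) := by grind
    exact hmiddle
  · have hbottom : r (x (i + 1)) (x i) ∧ r (x (i + 2)) (x i) := by grind
    exact h12.imp (⟨·, hbottom.2⟩) (⟨·, hbottom.1⟩)

-- The rotation starting at `x p` puts `x m` in position `m - p`, the reversed rotation starting at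
-- `x (-q)` puts it in position `-q - m`; these agree modulo 3 exactly for `m = q - p`.
theorem IsCondorcetDomain.exists_neverRanks (hD : IsCondorcetDomain X D) {x : Fin 3 → α}
    (hxX : ∀ m, x m ∈ X) (hx : Function.Injective x) : ∃ i j, NeverRanks D x i j := by
  obtain ⟨p, hp⟩ := hD.exists_missing_rotation x
  obtain ⟨q, hq⟩ := hD.exists_missing_rotation fun m => x (-m)
  refine ⟨q - p, p + q, fun r hr hij => ?_⟩
  have hp_start : q - p - (p + q) = p := by clear * -; decide +revert
  have hq_start : q - p + (p + q) = -q := by clear * -; decide +revert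
  rcases (hD.1 r hr).ranksChain_of_ncard_above hxX hx hij with hchain | hchain
  · rw [hp_start] at hchain
    exact hp r hr hchain
  · rw [hq_start] at hchain
    exact hq r hr (by simpa only [neg_add'] using hchain)

theorem condorcet_ramsey_never_condition_general (k : ℕ) :
    ∃ N : ℕ, ∀ {α : Type u} [LinearOrder α] {X : Set α} {D : Set (α → α → Prop)},
      IsCondorcetDomain X D → ∀ S : Finset α, ↑S ⊆ X → N ≤ #S →
      ∃ A ⊆ S, #A = k ∧ ∃ i j : Fin 3,
        ∀ x : Fin 3 → α, StrictMono x → (∀ m, x m ∈ A) → NeverRanks D x i j := by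
  obtain ⟨N, hN⟩ := exists_monochromatic_strictMono.{u} 3 fun _ : Fin 3 × Fin 3 => k
  refine ⟨N, fun {α} _ {X D} hD S hSX hS => ?_⟩
  have hnever (x : Fin 3 → α) (hx : StrictMono x) (hxS : ∀ m, x m ∈ S) :
      ∃ p : Fin 3 × Fin 3, NeverRanks D x p.1 p.2 := by
    simpa using hD.exists_neverRanks (fun m => hSX (hxS m)) hx.injective
  choose! p hp using hnever
  obtain ⟨⟨i, j⟩, A, hAS, hA, hmono⟩ := hN S p hS
  refine ⟨A, hAS, hA, i, j, fun x hx hxA => ?_⟩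
  simpa [hmono x hx hxA] using hp x hx fun m => hAS (hxA m)

end Condorcet

theorem posInTriple_eq_ncard {a b c : ℕ} (habc : Function.Injective ![a, b, c])
    (r : ℕ → ℕ → Prop) (y : ℕ) :
    posInTriple r a b c y = 1 + {m | r (![a, b, c] m) y}.ncard := by
  have hinter : {w | (w = a ∨ w = b ∨ w = c) ∧ r w y} =
      Set.range ![a, b, c] ∩ {w | r w y} := by
    ext w
    simp [or_comm, or_left_comm]
  rw [posInTriple, hinter, ← Set.image_preimage_eq_range_inter,
    Set.ncard_image_of_injective _ habc]
  rfl

theorem tripleNth_succ (a b c : ℕ) (i : Fin 3) : tripleNth a b c (i + 1) = ![a, b, c] i := by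
  fin_cases i <;> rfl

theorem NeverRanks.neverCondition {D : Set (ℕ → ℕ → Prop)} {a b c : ℕ} {i j : Fin 3}
    (habc : Function.Injective ![a, b, c]) (h : NeverRanks D ![a, b, c] i j) :
    NeverCondition D a b c (i + 1) (j + 1) := by
  intro r hr
  rw [tripleNth_succ, posInTriple_eq_ncard habc]
  have := h r hr
  omega

/-- Ramsey property: for every `k ≥ 3` there is an `N` such that for all `n ≥ N`,
every Condorcet domain on `{1,…,n}` has a `k`-element subset `A` and a never condition
`iNj` satisfied by every triple `a < b < c` of elements of `A`. -/
theorem condorcet_ramsey_never_condition (k : ℕ) (hk : 3 ≤ k) :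
    ∃ N : ℕ, ∀ n : ℕ, N ≤ n → ∀ D : Set (ℕ → ℕ → Prop),
      IsCondorcetDomain (Set.Icc 1 n) D →
      ∃ A : Set ℕ, A ⊆ Set.Icc 1 n ∧ A.ncard = k ∧
        ∃ i ∈ ({1, 2, 3} : Set ℕ), ∃ j ∈ ({1, 2, 3} : Set ℕ),
          ∀ a ∈ A, ∀ b ∈ A, ∀ c ∈ A, a < b → b < c → NeverCondition D a b c i j := by
  obtain ⟨N, hN⟩ := condorcet_ramsey_never_condition_general k
  refine ⟨N, fun n hn D hD => ?_⟩
  obtain ⟨A, hAS, hA, i, j, hij⟩ := hN hD (Icc 1 n) (by simp) (by simpa)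
  have hsucc (m : Fin 3) : (m : ℕ) + 1 ∈ ({1, 2, 3} : Set ℕ) := by fin_cases m <;> simp
  refine ⟨A, by simpa using coe_subset.mpr hAS, by simpa, i + 1, hsucc i, j + 1, hsucc j, ?_⟩
  intro a ha b hb c hc hab hbc
  have habc : StrictMono ![a, b, c] := by simp [hab, hbc]
  have habcA : ∀ m, ![a, b, c] m ∈ A := by simp_all [Fin.forall_fin_succ]
  exact (hij _ habc habcA).neverCondition habc.injective
end
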